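/- arXiv:2109.00473 — 3 statements merged into one kernel-verified Lean document; each statement's English description precedes it below -/
import Mathlib

section
/- Any two tournaments on the 5-element set Fin 5 in which every vertex has out-degree exactly 2 are isomorphic: there is a permutation π of the vertices with π(a) → π(b) in the second tournament iff a → b in the first. -/
/-- A tournament: an irreflexive relation such that for distinct vertices exactly one
direction holds. -/
def IsTournament (r : Fin 5 → Fin 5 → Prop) : Prop :=
  (∀ a, ¬ r a a) ∧ ∀ a b : Fin 5, a ≠ b → Xor' (r a b) (r b a)

/-- The out-degree of a vertex: the number of vertices it defeats. -/
noncomputable def outDeg (r : Fin 5 → Fin 5 → Prop) (v : Fin 5) : ℕ :=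
  Nat.card {w : Fin 5 // r v w}

/-! Let `v` be a vertex of a nonempty tournament with all out-degrees `2`. If `v` beats `a` and `b`
with `a → b`, and `b` beats `c` and `d` with `c → d`, then all remaining arcs among
`v, a, b, c, d` are forced: each vertex beats the next two in this cyclic order. These five
vertices have no arc leaving them. A further vertex would beat all five, so its out-neighbourhood
would strictly contain that of `v`, although both have size `2`. Hence the tournament is a copy
of one fixed model on `Fin 5`. -/

section OutRegular

variable {V ι : Type*} {r : V → V → Prop} {s : ι → ι → Prop} {d : ℕ}

/-- The out-neighbourhood of a vertex `v` of the directed graph given by `r`. -/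
def outNeighbors (r : V → V → Prop) (v : V) : Set V := {w | r v w}

/-- The out-regular directed graphs of degree `d`, used to express regularity of a tournament on
an arbitrary vertex type. The extended cardinality keeps infinite out-neighbourhoods from
counting as empty ones. -/
def IsOutRegular (r : V → V → Prop) (d : ℕ) : Prop :=
  ∀ v, (outNeighbors r v).encard = d

theorem IsOutRegular.finite_outNeighbors (hr : IsOutRegular r d) (v : V) :
    (outNeighbors r v).Finite :=
  Set.finite_of_encard_eq_coe (hr v)

theorem IsOutRegular.eq_univ_of_outNeighbors_subset [Std.Asymm r] [Std.Trichotomous r]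
    (hr : IsOutRegular r d) {S : Set V} (hne : S.Nonempty)
    (hS : ∀ v ∈ S, outNeighbors r v ⊆ S) : S = Set.univ := by
  obtain ⟨v, hv⟩ := hne
  refine Set.eq_univ_of_forall fun w => by_contra fun hw => ?_
  have subset_out : S ⊆ outNeighbors r w := fun x hx => by
    rcases trichotomous_of r w x with h | rfl | h
    exacts [h, absurd hx hw, absurd (hS x hx h) hw]
  have out_eq : outNeighbors r v = outNeighbors r w :=
    (hr.finite_outNeighbors v).eq_of_subset_of_encard_le ((hS v hv).trans subset_out)
      ((hr w).trans (hr v).symm).le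
  have loop : v ∈ outNeighbors r v := out_eq ▸ subset_out hv
  exact irrefl_of r v loop

theorem IsOutRegular.image_outNeighbors (hs : IsOutRegular s d) (hr : IsOutRegular r d)
    (f : s ↪r r) (i : ι) : f '' outNeighbors s i = outNeighbors r (f i) := by
  refine (hr.finite_outNeighbors (f i)).eq_of_subset_of_encard_le' ?_ ?_
  · rintro _ ⟨j, hj, rfl⟩
    exact f.map_rel_iff.2 hj
  · rw [f.injective.encard_image, hs i, hr (f i)]

theorem IsOutRegular.surjective_relEmbedding [Nonempty ι] [Std.Asymm r] [Std.Trichotomous r]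
    (hs : IsOutRegular s d) (hr : IsOutRegular r d) (f : s ↪r r) : Function.Surjective f := by
  refine Set.range_eq_univ.1 (hr.eq_univ_of_outNeighbors_subset (Set.range_nonempty f) ?_)
  rintro _ ⟨i, rfl⟩
  rw [← hs.image_outNeighbors hr f i]
  exact Set.image_subset_range f _

end OutRegular

section CyclicTournament

variable {V : Type*} {r : V → V → Prop}

theorem ne_of_rel_of_rel [Std.Asymm r] {x y z : V} (hxy : r x y) (hyz : r y z) : x ≠ z := by
  rintro rfl
  exact asymm_of r hxy hyz

theorem IsOutRegular.exists_transitive_triple [Std.Trichotomous r] (hr : IsOutRegular r 2) (v : V) :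
    ∃ a b, r v a ∧ r v b ∧ r a b := by
  obtain ⟨a, b, hab, hv⟩ := Set.encard_eq_two.1 (hr v)
  have hva : r v a := hv.ge (Set.mem_insert a {b})
  have hvb : r v b := hv.ge (Set.mem_insert_of_mem a rfl)
  rcases trichotomous_of r a b with h | h | h
  exacts [⟨a, b, hva, hvb, h⟩, absurd h hab, ⟨b, a, hvb, hva, h⟩]

theorem IsOutRegular.outNeighbors_eq_pair (hr : IsOutRegular r 2) {v x y : V}
    (hvx : r v x) (hvy : r v y) (hxy : x ≠ y) : outNeighbors r v = {x, y} := by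
  refine ((Set.toFinite {x, y}).eq_of_subset_of_encard_le ?_ ?_).symm
  · exact Set.insert_subset hvx (Set.singleton_subset_iff.2 hvy)
  · rw [hr v, Set.encard_pair hxy, Nat.cast_ofNat]

theorem IsOutRegular.rel_of_ne_outNeighbors [Std.Trichotomous r] (hr : IsOutRegular r 2)
    {v x y z : V} (hvx : r v x) (hvy : r v y) (hxy : x ≠ y) (hzv : z ≠ v) (hzx : z ≠ x)
    (hzy : z ≠ y) : r z v := by
  rcases trichotomous_of r z v with h | h | h
  · exact h
  · exact absurd h hzv
  · have hz : z ∈ ({x, y} : Set V) := hr.outNeighbors_eq_pair hvx hvy hxy ▸ h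
    exact (hz.elim hzx hzy).elim

/-- The cyclic tournament on five vertices, the model of every tournament with all out-degrees
`2`. The addition is that of `Fin 5`, hence modulo `5`. -/
def cyclicTournament (i j : Fin 5) : Prop := j = i + 1 ∨ j = i + 2

instance cyclicTournament.instTrichotomous : Std.Trichotomous cyclicTournament :=
  ⟨by unfold cyclicTournament; decide⟩

theorem isOutRegular_cyclicTournament : IsOutRegular cyclicTournament 2 := fun i =>
  Set.encard_pair (by simp : i + 1 ≠ i + 2)

theorem IsOutRegular.exists_cyclic_arrangement [Nonempty V] [Std.Asymm r] [Std.Trichotomous r]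
    (hr : IsOutRegular r 2) :
    ∃ f : Fin 5 → V, ∀ i, r (f i) (f (i + 1)) ∧ r (f i) (f (i + 2)) := by
  obtain ⟨v⟩ := ‹Nonempty V›
  obtain ⟨a, b, hva, hvb, hab⟩ := hr.exists_transitive_triple v
  obtain ⟨c, d, hbc, hbd, hcd⟩ := hr.exists_transitive_triple b
  have hac_ne : a ≠ c := ne_of_rel_of_rel hab hbc
  have had_ne : a ≠ d := ne_of_rel_of_rel hab hbd
  have hcv : r c v := hr.rel_of_ne_outNeighbors hva hvb (ne_of_irrefl hab)
    (ne_of_rel_of_rel hvb hbc).symm hac_ne.symm (ne_of_irrefl' hbc)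
  have hdv : r d v := hr.rel_of_ne_outNeighbors hva hvb (ne_of_irrefl hab)
    (ne_of_rel_of_rel hvb hbd).symm had_ne.symm (ne_of_irrefl' hbd)
  have hac : r a c := hr.rel_of_ne_outNeighbors hcd hcv (ne_of_irrefl hdv)
    hac_ne had_ne (ne_of_irrefl' hva)
  have hda : r d a := hr.rel_of_ne_outNeighbors hab hac (ne_of_irrefl hbc)
    had_ne.symm (ne_of_irrefl' hbd) (ne_of_irrefl' hcd)
  refine ⟨![v, a, b, c, d], fun i => ?_⟩
  fin_cases i
  exacts [⟨hva, hvb⟩, ⟨hab, hac⟩, ⟨hbc, hbd⟩, ⟨hcd, hcv⟩, ⟨hdv, hda⟩]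

theorem IsOutRegular.nonempty_relIso_cyclicTournament [Nonempty V] [Std.Asymm r]
    [Std.Trichotomous r] (hr : IsOutRegular r 2) : Nonempty (cyclicTournament ≃r r) := by
  obtain ⟨f, hf⟩ := hr.exists_cyclic_arrangement
  let e : cyclicTournament ↪r r := RelEmbedding.ofMonotone f <| by
    rintro i _ (rfl | rfl)
    exacts [(hf i).1, (hf i).2]
  exact ⟨RelIso.ofSurjective e (isOutRegular_cyclicTournament.surjective_relEmbedding hr e)⟩

end CyclicTournament

theorem regular_tournaments_isomorphic_general {V W : Type*} [Nonempty V] [Nonempty W]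
    {r : V → V → Prop} {s : W → W → Prop} [Std.Asymm r] [Std.Trichotomous r]
    [Std.Asymm s] [Std.Trichotomous s] (hr : IsOutRegular r 2) (hs : IsOutRegular s 2) :
    Nonempty (r ≃r s) := by
  obtain ⟨e⟩ := hr.nonempty_relIso_cyclicTournament
  obtain ⟨e'⟩ := hs.nonempty_relIso_cyclicTournament
  exact ⟨e.symm.trans e'⟩

section FinFive

variable {r : Fin 5 → Fin 5 → Prop}

theorem IsTournament.asymm (hr : IsTournament r) : Std.Asymm r where
  asymm a b hab hba := by
    have hne : a ≠ b := by
      rintro rfl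
      exact hr.1 a hab
    exact (hr.2 a b hne).elim (fun h => h.2 hba) fun h => h.2 hab

theorem IsTournament.trichotomous (hr : IsTournament r) : Std.Trichotomous r where
  trichotomous a b hab hba :=
    by_contra fun hne => (hr.2 a b hne).elim (fun h => hab h.1) fun h => hba h.1

theorem isOutRegular_iff_outDeg_eq {d : ℕ} : IsOutRegular r d ↔ ∀ v, outDeg r v = d := by
  refine forall_congr' fun v => ?_
  rw [← (Set.toFinite (outNeighbors r v)).cast_ncard_eq, Nat.cast_inj]
  rfl

end FinFive

/-- any two tournaments on Fin 5 in which every vertex has out-degree 2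
are isomorphic via a relabeling of the vertices. -/
theorem regular_tournaments_isomorphic (r s : Fin 5 → Fin 5 → Prop)
    (hr : IsTournament r) (hs : IsTournament s)
    (h2r : ∀ v, outDeg r v = 2) (h2s : ∀ v, outDeg s v = 2) :
    ∃ π : Equiv.Perm (Fin 5), ∀ a b : Fin 5, s (π a) (π b) ↔ r a b := by
  have := hr.asymm
  have := hr.trichotomous
  have := hs.asymm
  have := hs.trichotomous
  obtain ⟨e⟩ := regular_tournaments_isomorphic_general
    (isOutRegular_iff_outDeg_eq.2 h2r) (isOutRegular_iff_outDeg_eq.2 h2s)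
  exact ⟨e.toEquiv, fun _ _ => e.map_rel_iff⟩
end

section
/- The number of tournaments on the 5-element set Fin 5 having neither a Condorcet winner (a vertex of out-degree 4) nor a Condorcet loser (a vertex of out-degree 0) is exactly 544. -/
/-!
Deleting a vertex `v` turns a tournament into a tournament on the other vertices together with the
out-neighbourhood of `v`, which is an arbitrary set of other vertices. Hence `n` vertices carry
`T n = 2 ^ (n.choose 2)` tournaments. A Condorcet winner, respectively loser, is a vertex whose
out-neighbourhood is full, respectively empty, so `n * T (n - 1)` tournaments have a winner and as
many have a loser; for `2 ≤ n`, deleting the winner keeps the loser, so `n * (n - 1) * T (n - 2)`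
tournaments have both. Inclusion-exclusion then gives
`T n - 2 * n * T (n - 1) + n * (n - 1) * T (n - 2)` tournaments with neither.
-/

open Set

/-- A tournament on an arbitrary vertex type, encoded as its relation "`a` defeats `b`". -/
def IsTournamentRel {V : Type*} (r : V → V → Prop) : Prop :=
  (∀ a, ¬ r a a) ∧ ∀ a b, a ≠ b → Xor (r a b) (r b a)

/-- The tournaments on `V`, bundled as a type so that they can be counted. -/
abbrev Tournament (V : Type*) := {r : V → V → Prop // IsTournamentRel r}

/-- The out-degree of a vertex in a relation on an arbitrary type; it is `0` when infinitely many
vertices are defeated. -/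
noncomputable def outDegree {V : Type*} (r : V → V → Prop) (v : V) : ℕ :=
  Nat.card {w // r v w}

theorem card_subtype_ne_of_card_eq_add_one {V : Type*} [Finite V] {n : ℕ}
    (hn : Nat.card V = n + 1) (v : V) : Nat.card {w // w ≠ v} = n :=
  ncard_compl_of_ncard_eq_add {v} (hn.trans (by rw [ncard_singleton]))

theorem ncard_exists_eq_card_mul {α ι : Type*} [Finite α] [Finite ι] {P : α → ι → Prop}
    (hP : ∀ a i j, P a i → P a j → i = j) {c : ℕ} (hc : ∀ i, {a | P a i}.ncard = c) :
    {a | ∃ i, P a i}.ncard = Nat.card ι * c := by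
  have hdisj : Pairwise (Function.onFun Disjoint fun i => {a | P a i}) := fun i j hij =>
    disjoint_left.mpr fun a hi hj => hij (hP a i j hi hj)
  cases nonempty_fintype ι
  rw [ofPred_exists, ncard_iUnion_of_finite (fun _ => toFinite _) hdisj,
    finsum_eq_sum_of_fintype]
  simp [hc]

namespace Tournament

variable {V : Type*}

instance : CoeFun (Tournament V) fun _ => V → V → Prop := ⟨Subtype.val⟩

theorem irrefl (t : Tournament V) (a : V) : ¬ t a a := t.2.1 a

theorem defeats_iff_not (t : Tournament V) {a b : V} (hab : a ≠ b) : t a b ↔ ¬ t b a :=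
  xor_iff_iff_not.mp (t.2.2 a b hab)

/-- A Condorcet winner: a vertex defeating every other vertex. -/
def IsWinner (t : Tournament V) (v : V) : Prop := ∀ w, w ≠ v → t v w

/-- A Condorcet loser: a vertex defeating no vertex. -/
def IsLoser (t : Tournament V) (v : V) : Prop := ∀ w, ¬ t v w

theorem IsWinner.unique {t : Tournament V} {v w : V} (hv : t.IsWinner v) (hw : t.IsWinner w) :
    v = w := by
  by_contra hne
  exact (t.defeats_iff_not hne).mp (hv w (Ne.symm hne)) (hw v hne)

theorem IsLoser.unique {t : Tournament V} {v w : V} (hv : t.IsLoser v) (hw : t.IsLoser w) :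
    v = w := by
  by_contra hne
  exact hv w ((t.defeats_iff_not hne).mpr (hw v))

theorem IsWinner.not_isLoser [Nontrivial V] {t : Tournament V} {v : V} (hv : t.IsWinner v) :
    ¬ t.IsLoser v := by
  obtain ⟨w, hw⟩ := exists_ne v
  exact fun hl => hl w (hv w hw)

section Degree

variable [Finite V] (t : Tournament V) (v : V)

theorem outDegree_eq_zero_iff_isLoser : outDegree t v = 0 ↔ t.IsLoser v := by
  rw [outDegree, Finite.card_eq_zero_iff, isEmpty_subtype, IsLoser]

theorem outDegree_eq_iff_isWinner {n : ℕ} (hn : Nat.card V = n + 1) :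
    outDegree t v = n ↔ t.IsWinner v := by
  have hsub : {w | t v w} ⊆ {v}ᶜ := fun w hw hwv => t.irrefl v (hwv ▸ hw)
  have hcard : ({v}ᶜ : Set V).ncard = n := card_subtype_ne_of_card_eq_add_one hn v
  calc outDegree t v = n
      ↔ {w | t v w}.ncard = ({v}ᶜ : Set V).ncard := by rw [hcard]; rfl
    _ ↔ {w | t v w} = {v}ᶜ :=
      ⟨fun h => eq_of_subset_of_ncard_le hsub h.ge, fun h => by rw [h]⟩
    _ ↔ t.IsWinner v := ⟨fun h w hw => h.ge hw, fun h => hsub.antisymm fun w hw => h w hw⟩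

end Degree

/-- The tournament induced on the vertices other than `v`. -/
def deleteVertex (t : Tournament V) (v : V) : Tournament {w // w ≠ v} :=
  ⟨fun a b => t a b, fun a => t.irrefl a,
    fun a b hab => t.2.2 a b (Subtype.coe_injective.ne hab)⟩

/-- The out-neighbourhood of `v`, as a set of vertices other than `v`. -/
def outNeighbors (t : Tournament V) (v : V) : Set {w // w ≠ v} := {w | t v w}

open Classical in
/-- The tournament obtained from a tournament `s` on the vertices other than `v` by letting `v`
defeat exactly the vertices in `S`. -/
def insertVertex (v : V) (s : Tournament {w // w ≠ v}) (S : Set {w // w ≠ v}) : Tournament V where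
  val a b :=
    if ha : a = v then ∃ hb : b ≠ v, ⟨b, hb⟩ ∈ S
    else if hb : b = v then ⟨a, ha⟩ ∉ S
    else s ⟨a, ha⟩ ⟨b, hb⟩
  property := by
    refine ⟨fun a => ?_, fun a b hab => ?_⟩
    · by_cases ha : a = v <;> simp [ha, s.irrefl]
    · rw [xor_iff_iff_not]
      by_cases ha : a = v <;> by_cases hb : b = v
      · exact absurd (ha.trans hb.symm) hab
      · simp [ha, hb]
      · simp [ha, hb]
      · simpa [ha, hb] using s.defeats_iff_not (by simpa using hab)

/-- A tournament amounts to the tournament left by deleting `v` and the out-neighbourhood of `v`. -/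
def deleteVertexEquiv (v : V) : Tournament V ≃ Tournament {w // w ≠ v} × Set {w // w ≠ v} where
  toFun t := (t.deleteVertex v, t.outNeighbors v)
  invFun p := insertVertex v p.1 p.2
  left_inv t := by
    ext a b
    by_cases ha : a = v <;> by_cases hb : b = v
    · simp [insertVertex, ha, hb, t.irrefl]
    · simp [insertVertex, outNeighbors, ha, hb]
    · simpa [insertVertex, outNeighbors, ha, hb] using (t.defeats_iff_not ha).symm
    · simp [insertVertex, deleteVertex, ha, hb]
  right_inv p := by
    refine Prod.ext (Subtype.ext ?_) ?_
    · ext a b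
      simp [insertVertex, deleteVertex, a.2, b.2]
    · ext a
      simp [insertVertex, outNeighbors, a.2]

theorem isWinner_iff_outNeighbors_eq_univ {t : Tournament V} {v : V} :
    t.IsWinner v ↔ t.outNeighbors v = univ := by
  simp [IsWinner, outNeighbors, eq_univ_iff_forall]

theorem isLoser_iff_outNeighbors_eq_empty {t : Tournament V} {v : V} :
    t.IsLoser v ↔ t.outNeighbors v = ∅ := by
  have hself : (∀ w, ¬ t v w) ↔ ∀ w, w ≠ v → ¬ t v w :=
    ⟨fun h w _ => h w, fun h w hw => h w (fun hwv => t.irrefl v (hwv ▸ hw)) hw⟩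
  simp [IsLoser, outNeighbors, eq_empty_iff_forall_notMem, hself]

theorem IsWinner.exists_isLoser_deleteVertex_iff [Nontrivial V] {t : Tournament V} {v : V}
    (hv : t.IsWinner v) : (∃ l, (t.deleteVertex v).IsLoser l) ↔ ∃ l, t.IsLoser l := by
  constructor
  · rintro ⟨⟨l, hlv⟩, hl⟩
    refine ⟨l, fun w hlw => ?_⟩
    by_cases hwv : w = v
    · subst hwv
      exact (t.defeats_iff_not hlv).mp hlw (hv l hlv)
    · exact hl ⟨w, hwv⟩ hlw
  · rintro ⟨l, hl⟩
    exact ⟨⟨l, fun hlv => hv.not_isLoser (hlv ▸ hl)⟩, fun w => hl w⟩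

section Counting

theorem ncard_outNeighbors_eq_and_deleteVertex_mem (v : V) (S : Set {w // w ≠ v})
    (P : Set (Tournament {w // w ≠ v})) :
    {t : Tournament V | t.outNeighbors v = S ∧ t.deleteVertex v ∈ P}.ncard = P.ncard := by
  have hpre : {t : Tournament V | t.outNeighbors v = S ∧ t.deleteVertex v ∈ P} =
      deleteVertexEquiv v ⁻¹' (P ×ˢ {S}) := by
    ext t
    exact and_comm
  rw [hpre, ncard_preimage_of_injective_subset_range (deleteVertexEquiv v).injective
    (by simp), ncard_prod, ncard_singleton, mul_one]

theorem ncard_outNeighbors_eq (v : V) (S : Set {w // w ≠ v}) :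
    {t : Tournament V | t.outNeighbors v = S}.ncard = Nat.card (Tournament {w // w ≠ v}) := by
  simpa using ncard_outNeighbors_eq_and_deleteVertex_mem v S univ

variable [Finite V]

theorem card_tournament {n : ℕ} (hn : Nat.card V = n) :
    Nat.card (Tournament V) = 2 ^ n.choose 2 := by
  induction n generalizing V with
  | zero =>
    have : IsEmpty V := Finite.card_eq_zero_iff.mp hn
    have : Unique (Tournament V) :=
      ⟨⟨⟨isEmptyElim, isEmptyElim, isEmptyElim⟩⟩, fun t => Subtype.ext (Subsingleton.elim _ _)⟩
    simp
  | succ n ih =>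
    obtain ⟨v⟩ : Nonempty V := Finite.card_pos_iff.mp (by omega)
    have hdel : Nat.card {w // w ≠ v} = n := card_subtype_ne_of_card_eq_add_one hn v
    have hset : Nat.card (Set {w // w ≠ v}) = 2 ^ n := by
      cases nonempty_fintype {w // w ≠ v}
      rw [Nat.card_eq_fintype_card, Fintype.card_set, ← Nat.card_eq_fintype_card, hdel]
    calc Nat.card (Tournament V)
        = Nat.card (Tournament {w // w ≠ v}) * Nat.card (Set {w // w ≠ v}) := by
          rw [Nat.card_congr (deleteVertexEquiv v), Nat.card_prod]
      _ = 2 ^ n.choose 2 * 2 ^ n := by rw [ih hdel, hset]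
      _ = 2 ^ (n + 1).choose 2 := by
          rw [← pow_add, Nat.choose_succ_succ' n 1, Nat.choose_one_right, add_comm]

theorem card_tournament_ne {n : ℕ} (hn : Nat.card V = n + 1) (v : V) :
    Nat.card (Tournament {w // w ≠ v}) = 2 ^ n.choose 2 :=
  card_tournament (card_subtype_ne_of_card_eq_add_one hn v)

theorem ncard_exists_isWinner {n : ℕ} (hn : Nat.card V = n + 1) :
    {t : Tournament V | ∃ v, t.IsWinner v}.ncard = (n + 1) * 2 ^ n.choose 2 := by
  rw [← hn]
  refine ncard_exists_eq_card_mul (fun _ _ _ hv hw => hv.unique hw) fun v => ?_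
  simp only [isWinner_iff_outNeighbors_eq_univ, ncard_outNeighbors_eq, card_tournament_ne hn]

theorem ncard_exists_isLoser {n : ℕ} (hn : Nat.card V = n + 1) :
    {t : Tournament V | ∃ v, t.IsLoser v}.ncard = (n + 1) * 2 ^ n.choose 2 := by
  rw [← hn]
  refine ncard_exists_eq_card_mul (fun _ _ _ hv hw => hv.unique hw) fun v => ?_
  simp only [isLoser_iff_outNeighbors_eq_empty, ncard_outNeighbors_eq, card_tournament_ne hn]

theorem ncard_isWinner_and_exists_isLoser {n : ℕ} (hn : Nat.card V = n + 2) (v : V) :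
    {t : Tournament V | t.IsWinner v ∧ ∃ l, t.IsLoser l}.ncard = (n + 1) * 2 ^ n.choose 2 := by
  have : Nontrivial V := Finite.one_lt_card_iff_nontrivial.mp (by omega)
  calc {t : Tournament V | t.IsWinner v ∧ ∃ l, t.IsLoser l}.ncard
      = {t : Tournament V | t.outNeighbors v = univ ∧
          t.deleteVertex v ∈ {s | ∃ l, s.IsLoser l}}.ncard := by
        congr with t
        rw [← isWinner_iff_outNeighbors_eq_univ]
        exact and_congr_right fun hv => hv.exists_isLoser_deleteVertex_iff.symm
    _ = {s : Tournament {w // w ≠ v} | ∃ l, s.IsLoser l}.ncard :=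
        ncard_outNeighbors_eq_and_deleteVertex_mem v univ _
    _ = (n + 1) * 2 ^ n.choose 2 :=
        ncard_exists_isLoser (card_subtype_ne_of_card_eq_add_one hn v)

theorem ncard_exists_isWinner_inter_exists_isLoser {n : ℕ} (hn : Nat.card V = n + 2) :
    ({t : Tournament V | ∃ v, t.IsWinner v} ∩ {t | ∃ v, t.IsLoser v}).ncard =
      (n + 2) * ((n + 1) * 2 ^ n.choose 2) := by
  have hinter : {t : Tournament V | ∃ v, t.IsWinner v} ∩ {t | ∃ v, t.IsLoser v} =
      {t | ∃ v, t.IsWinner v ∧ ∃ l, t.IsLoser l} := by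
    ext t
    exact exists_and_right.symm
  rw [hinter, ← hn]
  exact ncard_exists_eq_card_mul (fun _ _ _ hv hw => hv.1.unique hw.1)
    (ncard_isWinner_and_exists_isLoser hn)

theorem ncard_not_exists_isWinner_and_not_exists_isLoser {n : ℕ} (hn : Nat.card V = n + 2) :
    ({t : Tournament V | (¬ ∃ w, t.IsWinner w) ∧ ¬ ∃ l, t.IsLoser l}.ncard : ℤ) =
      2 ^ (n + 2).choose 2 - 2 * (n + 2) * 2 ^ (n + 1).choose 2 +
        (n + 2) * (n + 1) * 2 ^ n.choose 2 := by
  let W : Set (Tournament V) := {t | ∃ w, t.IsWinner w}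
  let L : Set (Tournament V) := {t | ∃ l, t.IsLoser l}
  have hneither : {t : Tournament V | (¬ ∃ w, t.IsWinner w) ∧ ¬ ∃ l, t.IsLoser l} = (W ∪ L)ᶜ := by
    ext t
    exact not_or.symm
  have hcompl : ((W ∪ L).ncard : ℤ) + (W ∪ L)ᶜ.ncard = 2 ^ (n + 2).choose 2 := by
    exact_mod_cast (ncard_add_ncard_compl (W ∪ L)).trans (card_tournament hn)
  have hunion : ((W ∪ L).ncard : ℤ) + (W ∩ L).ncard = W.ncard + L.ncard := by
    exact_mod_cast ncard_union_add_ncard_inter W L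
  have hW : (W.ncard : ℤ) = (n + 2) * 2 ^ (n + 1).choose 2 := by
    exact_mod_cast ncard_exists_isWinner hn
  have hL : (L.ncard : ℤ) = (n + 2) * 2 ^ (n + 1).choose 2 := by
    exact_mod_cast ncard_exists_isLoser hn
  have hWL : ((W ∩ L).ncard : ℤ) = (n + 2) * ((n + 1) * 2 ^ n.choose 2) := by
    exact_mod_cast ncard_exists_isWinner_inter_exists_isLoser hn
  rw [hneither]
  linear_combination hcompl - hunion - hW - hL + hWL

end Counting

end Tournament

theorem count_tournaments_without_CW_CL_general {V : Type*} {n : ℕ}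
    (hn : Nat.card V = n + 2) :
    (Nat.card {r : V → V → Prop // IsTournamentRel r ∧
        (¬ ∃ w, outDegree r w = n + 1) ∧ ¬ ∃ l, outDegree r l = 0} : ℤ) =
      2 ^ (n + 2).choose 2 - 2 * (n + 2) * 2 ^ (n + 1).choose 2 +
        (n + 2) * (n + 1) * 2 ^ n.choose 2 := by
  have : Finite V := Nat.finite_of_card_ne_zero (by omega)
  rw [← Tournament.ncard_not_exists_isWinner_and_not_exists_isLoser hn]
  simp only [← Tournament.outDegree_eq_iff_isWinner _ _ hn,
    ← Tournament.outDegree_eq_zero_iff_isLoser]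
  exact congrArg Nat.cast (Nat.card_congr (Equiv.subtypeSubtypeEquivSubtypeInter IsTournamentRel
    fun r => (¬ ∃ w, outDegree r w = n + 1) ∧ ¬ ∃ l, outDegree r l = 0).symm)

/-- exactly 544 tournaments on Fin 5 have neither a Condorcet winner
(out-degree 4) nor a Condorcet loser (out-degree 0). -/
theorem count_tournaments_without_CW_CL :
    Nat.card {r : Fin 5 → Fin 5 → Prop //
      IsTournament r ∧ (¬ ∃ w, outDeg r w = 4) ∧ (¬ ∃ l, outDeg r l = 0)} = 544 := by
  apply Nat.cast_injective (R := ℤ)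
  exact (count_tournaments_without_CW_CL_general (n := 3) (Nat.card_fin 5)).trans
    (by norm_num [Nat.choose])
end

section
/- The number of tournaments on the 5-element set Fin 5 having no vertex of out-degree 4, no vertex of out-degree 0, and exactly three vertices of out-degree 2 whose induced sub-tournament is transitive (a strict linear order on the three vertices), is exactly 120. -/
/-! Let `u → v → t`, `u → t` be the vertices of out-degree 2. Then `u` beats nobody else, `t` must
beat both remaining vertices, and `v` beats exactly one of them, say `l`. The other one, `w`, beats
`u` and `v`, so it must also beat `l`, lest its out-degree be 2. Hence all arcs are determined by
the enumeration `w, u, v, t, l` of the vertices: every tournament in the class is a relabelling of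
one model. The model has no nontrivial automorphism, so distinct relabellings are distinct
tournaments, and there are `5!` of them. -/

section RelIso

variable {V : Type*} {r s : V → V → Prop}

theorem nonempty_relIso_of_forall_rel [Finite V] [Std.Trichotomous s] [Std.Asymm r] {f : V → V}
    (hf : ∀ a b, s a b → r (f a) (f b)) : Nonempty (s ≃r r) := by
  let e : s ↪r r := .ofMonotone f hf
  exact ⟨.ofSurjective e (Finite.surjective_of_injective e.injective)⟩

theorem card_relabellings_of_subsingleton_aut [Subsingleton (s ≃r s)] :
    Nat.card {r : V → V → Prop // Nonempty (s ≃r r)} = Nat.card (Equiv.Perm V) := by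
  let relabel (σ : Equiv.Perm V) : {r : V → V → Prop // Nonempty (s ≃r r)} :=
    ⟨σ.symm ⁻¹'o s, ⟨(RelIso.preimage σ.symm s).symm⟩⟩
  refine (Nat.card_congr (Equiv.ofBijective relabel ⟨fun σ τ h => ?_, ?_⟩)).symm
  · have h_rel (a b : V) : s (σ.symm a) (σ.symm b) ↔ s (τ.symm a) (τ.symm b) :=
      iff_of_eq (congrFun₂ (congrArg Subtype.val h) a b)
    let e : s ≃r s := ⟨σ.trans τ.symm, fun {a b} => by simpa using (h_rel (σ a) (σ b)).symm⟩
    have he (a : V) : τ.symm (σ a) = a := DFunLike.congr_fun (Subsingleton.elim e (.refl s)) a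
    exact Equiv.ext fun a => τ.symm_apply_eq.mp (he a)
  · rintro ⟨r, ⟨e⟩⟩
    refine ⟨e.toEquiv, Subtype.ext (funext₂ fun a b => propext ?_)⟩
    exact e.symm.map_rel_iff

end RelIso

section Tournament

variable {r s : Fin 5 → Fin 5 → Prop} {a b c : Fin 5}

theorem IsTournament.ne (hr : IsTournament r) (h : r a b) : a ≠ b := by
  rintro rfl
  exact hr.1 a h

theorem IsTournament.not_rel_iff (hr : IsTournament r) (hab : a ≠ b) : ¬ r a b ↔ r b a :=
  xor_iff_not_iff'.mp (hr.2 a b hab)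

theorem isTournament_iff_asymm_and_trichotomous :
    IsTournament r ↔ Std.Asymm r ∧ Std.Trichotomous r := by
  constructor
  · refine fun hr => ⟨⟨fun a b hab => ?_⟩, ⟨fun a b hab hba => ?_⟩⟩
    · exact (hr.not_rel_iff (hr.ne hab).symm).mpr hab
    · by_contra hne
      exact hba ((hr.not_rel_iff hne).mp hab)
  · refine fun ⟨h_asymm, h_tri⟩ => ⟨h_asymm.irrefl.irrefl, fun a b hne => ?_⟩
    refine xor_iff_not_iff'.mpr ⟨fun hab => ?_, h_asymm.asymm b a⟩
    by_contra hba
    exact hne (h_tri.trichotomous a b hab hba)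

theorem IsTournament.of_relIso (hs : IsTournament s) (e : s ≃r r) : IsTournament r := by
  obtain ⟨_, _⟩ := isTournament_iff_asymm_and_trichotomous.mp hs
  exact isTournament_iff_asymm_and_trichotomous.mpr
    ⟨e.symm.toRelEmbedding.asymm, e.symm.toRelEmbedding.trichotomous⟩

theorem outDeg_relIso (e : s ≃r r) (a : Fin 5) : outDeg r (e a) = outDeg s a :=
  (Nat.card_congr (e.toEquiv.subtypeEquiv fun _ => e.map_rel_iff.symm)).symm

theorem outDeg_eq_two_iff :
    outDeg r a = 2 ↔ ∃ b c, b ≠ c ∧ ∀ x, r a x ↔ x = b ∨ x = c := by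
  simpa only [Set.ext_iff] using! Set.ncard_eq_two (s := {x | r a x})

theorem exists_rel_iff_of_outDeg_eq_two (ha : outDeg r a = 2) (hab : r a b) :
    ∃ c, c ≠ b ∧ ∀ x, r a x ↔ x = b ∨ x = c := by
  obtain ⟨d, e, hde, h_iff⟩ := outDeg_eq_two_iff.mp ha
  rcases (h_iff b).mp hab with rfl | rfl
  · exact ⟨e, hde.symm, h_iff⟩
  · exact ⟨d, hde, fun x => (h_iff x).trans or_comm⟩

theorem rel_iff_of_outDeg_eq_two (ha : outDeg r a = 2) (hab : r a b) (hac : r a c) (hbc : b ≠ c)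
    (x : Fin 5) : r a x ↔ x = b ∨ x = c := by
  obtain ⟨d, -, h_iff⟩ := exists_rel_iff_of_outDeg_eq_two ha hab
  obtain rfl : c = d := ((h_iff c).mp hac).resolve_left hbc.symm
  exact h_iff x

end Tournament

/-- The vertices `u`, `v`, `t` are the vertices of out-degree 2 of the tournament `r`, and are
linearly ordered as `u → v → t`. -/
structure IsMiddleChain (r : Fin 5 → Fin 5 → Prop) (u v t : Fin 5) : Prop where
  isTournament : IsTournament r
  rel_fst_snd : r u v
  rel_snd_trd : r v t
  rel_fst_trd : r u t
  outDeg_eq_two_iff_mem : ∀ x, outDeg r x = 2 ↔ x = u ∨ x = v ∨ x = t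

/-- The model tournament: the rotational tournament `i → i + 1, i + 2` on `ℤ/5` with its arc
`4 → 0` reversed. Its vertices `1 → 2 → 3` of out-degree 2 form the middle chain. -/
def ModelArc (i j : Fin 5) : Prop :=
  i = 0 ∧ j = 4 ∨ ¬ (i = 4 ∧ j = 0) ∧ (j = i + 1 ∨ j = i + 2)

instance : DecidableRel ModelArc := fun _ _ => by
  unfold ModelArc
  infer_instance

theorem isTournament_modelArc : IsTournament ModelArc :=
  ⟨by decide, fun a b hab => xor_iff_not_iff'.mpr (by revert a b; decide)⟩

theorem outDeg_modelArc (i : Fin 5) : outDeg ModelArc i = ![3, 2, 2, 2, 1] i := by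
  rw [outDeg, Nat.card_eq_fintype_card]
  revert i
  decide

theorem isMiddleChain_modelArc : IsMiddleChain ModelArc 1 2 3 where
  isTournament := isTournament_modelArc
  rel_fst_snd := by decide
  rel_snd_trd := by decide
  rel_fst_trd := by decide
  outDeg_eq_two_iff_mem := by
    simp only [outDeg_modelArc]
    decide

instance : Subsingleton (ModelArc ≃r ModelArc) := by
  have h_fixed (e : ModelArc ≃r ModelArc) (i : Fin 5) : e i = i := by
    have h_arc {i j : Fin 5} (h : ModelArc i j) : ModelArc (e i) (e j) := e.map_rel_iff.mpr h
    have h_deg (i : Fin 5) : ![3, 2, 2, 2, 1] (e i) = ![3, 2, 2, 2, 1] i := by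
      simpa only [outDeg_modelArc] using outDeg_relIso e i
    have h0 : e 0 = 0 := by
      have : ∀ x : Fin 5, ![3, 2, 2, 2, 1] x = 3 → x = 0 := by decide
      exact this _ (h_deg 0)
    have h4 : e 4 = 4 := by
      have : ∀ x : Fin 5, ![3, 2, 2, 2, 1] x = 1 → x = 4 := by decide
      exact this _ (h_deg 4)
    have h1 : e 1 = 1 := by
      have : ∀ x, ModelArc 4 x → x = 1 := by decide
      exact this _ (h4 ▸ h_arc (by decide : ModelArc 4 1))
    have h3 : e 3 = 3 := by
      have : ∀ x, ModelArc x 0 → x = 3 := by decide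
      exact this _ (h0 ▸ h_arc (by decide : ModelArc 3 0))
    have h2 : e 2 = 2 := by
      have : ∀ x, ModelArc 1 x → ModelArc x 3 → x = 2 := by decide
      exact this _ (h1 ▸ h_arc (by decide : ModelArc 1 2)) (h3 ▸ h_arc (by decide : ModelArc 2 3))
    fin_cases i <;> assumption
  exact ⟨fun e e' => RelIso.ext fun i => (h_fixed e i).trans (h_fixed e' i).symm⟩

namespace IsMiddleChain

variable {r s : Fin 5 → Fin 5 → Prop} {u v t w l x : Fin 5}

theorem map_relIso (h : IsMiddleChain s u v t) (e : s ≃r r) :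
    IsMiddleChain r (e u) (e v) (e t) where
  isTournament := h.isTournament.of_relIso e
  rel_fst_snd := e.map_rel_iff.mpr h.rel_fst_snd
  rel_snd_trd := e.map_rel_iff.mpr h.rel_snd_trd
  rel_fst_trd := e.map_rel_iff.mpr h.rel_fst_trd
  outDeg_eq_two_iff_mem := e.surjective.forall.mpr fun a => by
    simp only [outDeg_relIso, h.outDeg_eq_two_iff_mem, e.injective.eq_iff]

theorem fst_ne_snd (h : IsMiddleChain r u v t) : u ≠ v := h.isTournament.ne h.rel_fst_snd

theorem snd_ne_trd (h : IsMiddleChain r u v t) : v ≠ t := h.isTournament.ne h.rel_snd_trd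

theorem fst_ne_trd (h : IsMiddleChain r u v t) : u ≠ t := h.isTournament.ne h.rel_fst_trd

theorem outDeg_fst (h : IsMiddleChain r u v t) : outDeg r u = 2 :=
  (h.outDeg_eq_two_iff_mem u).mpr (.inl rfl)

theorem outDeg_snd (h : IsMiddleChain r u v t) : outDeg r v = 2 :=
  (h.outDeg_eq_two_iff_mem v).mpr (.inr (.inl rfl))

theorem outDeg_trd (h : IsMiddleChain r u v t) : outDeg r t = 2 :=
  (h.outDeg_eq_two_iff_mem t).mpr (.inr (.inr rfl))

theorem outDeg_ne_two_iff (h : IsMiddleChain r u v t) :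
    outDeg r x ≠ 2 ↔ x ≠ u ∧ x ≠ v ∧ x ≠ t := by
  rw [Ne, h.outDeg_eq_two_iff_mem, not_or, not_or]

theorem exists_forall_outDeg_ne_two_iff (h : IsMiddleChain r u v t) (hl : outDeg r l ≠ 2) :
    ∃ w, w ≠ l ∧ ∀ x, outDeg r x ≠ 2 ↔ x = w ∨ x = l := by
  have h_filter : ({x | outDeg r x ≠ 2} : Finset (Fin 5)) = {u, v, t}ᶜ := by
    ext x
    simp [h.outDeg_eq_two_iff_mem]
  have h_card : ({x | outDeg r x ≠ 2} : Finset (Fin 5)).card = 2 := by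
    rw [h_filter, Finset.card_compl, Fintype.card_fin,
      Finset.card_eq_three.mpr ⟨u, v, t, h.fst_ne_snd, h.fst_ne_trd, h.snd_ne_trd, rfl⟩]
  have h_erase : (({x | outDeg r x ≠ 2} : Finset (Fin 5)).erase l).card = 1 := by
    rw [Finset.card_erase_of_mem (by simpa using hl), h_card]
  obtain ⟨w, hw⟩ := Finset.card_eq_one.mp h_erase
  simp only [Finset.ext_iff, Finset.mem_erase, Finset.mem_filter_univ, Finset.mem_singleton] at hw
  exact ⟨w, ((hw w).mpr rfl).1, by grind⟩

theorem rel_fst_of_outDeg_ne_two (h : IsMiddleChain r u v t) (hx : outDeg r x ≠ 2) : r x u := by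
  obtain ⟨hxu, hxv, hxt⟩ := h.outDeg_ne_two_iff.mp hx
  rw [← h.isTournament.not_rel_iff hxu.symm,
    rel_iff_of_outDeg_eq_two h.outDeg_fst h.rel_fst_snd h.rel_fst_trd h.snd_ne_trd]
  exact not_or.mpr ⟨hxv, hxt⟩

theorem trd_rel_of_outDeg_ne_two (h : IsMiddleChain r u v t) (hx : outDeg r x ≠ 2) : r t x := by
  have h_out {y : Fin 5} (hty : r t y) : outDeg r y ≠ 2 := by
    have h_asymm : ¬ r y t := (h.isTournament.not_rel_iff (h.isTournament.ne hty).symm).mpr hty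
    refine h.outDeg_ne_two_iff.mpr ⟨?_, ?_, (h.isTournament.ne hty).symm⟩
    · rintro rfl
      exact h_asymm h.rel_fst_trd
    · rintro rfl
      exact h_asymm h.rel_snd_trd
  obtain ⟨b, c, hbc, h_iff⟩ := outDeg_eq_two_iff.mp h.outDeg_trd
  have hb : outDeg r b ≠ 2 := h_out ((h_iff b).mpr (.inl rfl))
  have hc : outDeg r c ≠ 2 := h_out ((h_iff c).mpr (.inr rfl))
  obtain ⟨w, -, h_compl⟩ := h.exists_forall_outDeg_ne_two_iff hc
  obtain rfl : b = w := ((h_compl b).mp hb).resolve_right hbc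
  exact (h_iff x).mpr ((h_compl x).mp hx)

theorem exists_rel_snd_and_snd_rel (h : IsMiddleChain r u v t) :
    ∃ w l, (∀ x, outDeg r x ≠ 2 ↔ x = w ∨ x = l) ∧ r w v ∧ r v l := by
  obtain ⟨l, hlt, h_out⟩ := exists_rel_iff_of_outDeg_eq_two h.outDeg_snd h.rel_snd_trd
  have hvl : r v l := (h_out l).mpr (.inr rfl)
  have hlu : l ≠ u := by
    rintro rfl
    exact (h.isTournament.not_rel_iff h.fst_ne_snd).mpr hvl h.rel_fst_snd
  have hl : outDeg r l ≠ 2 :=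
    h.outDeg_ne_two_iff.mpr ⟨hlu, (h.isTournament.ne hvl).symm, hlt⟩
  obtain ⟨w, hwl, h_compl⟩ := h.exists_forall_outDeg_ne_two_iff hl
  obtain ⟨-, hwv, hwt⟩ := h.outDeg_ne_two_iff.mp ((h_compl w).mpr (.inl rfl))
  refine ⟨w, l, h_compl, (h.isTournament.not_rel_iff hwv.symm).mp ?_, hvl⟩
  rw [h_out]
  exact not_or.mpr ⟨hwt, hwl⟩

theorem rel_of_rel_snd (h : IsMiddleChain r u v t)
    (h_compl : ∀ x, outDeg r x ≠ 2 ↔ x = w ∨ x = l) (hwv : r w v) : r w l := by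
  have hw : outDeg r w ≠ 2 := (h_compl w).mpr (.inl rfl)
  have hwu : r w u := h.rel_fst_of_outDeg_ne_two hw
  have hwt : ¬ r w t :=
    (h.isTournament.not_rel_iff (h.outDeg_ne_two_iff.mp hw).2.2).mpr (h.trd_rel_of_outDeg_ne_two hw)
  by_contra hwl
  refine hw (outDeg_eq_two_iff.mpr ⟨u, v, h.fst_ne_snd, fun x => ⟨fun hwx => ?_, ?_⟩⟩)
  · have hxw : x ≠ w := (h.isTournament.ne hwx).symm
    have hxl : x ≠ l := fun hxl => hwl (hxl ▸ hwx)
    have hxt : x ≠ t := fun hxt => hwt (hxt ▸ hwx)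
    have hx : outDeg r x = 2 := not_not.mp (mt (h_compl x).mp (not_or.mpr ⟨hxw, hxl⟩))
    exact ((h.outDeg_eq_two_iff_mem x).mp hx).imp_right (Or.resolve_right · hxt)
  · rintro (rfl | rfl) <;> assumption

theorem nonempty_relIso_modelArc (h : IsMiddleChain r u v t) : Nonempty (ModelArc ≃r r) := by
  obtain ⟨w, l, h_compl, hwv, hvl⟩ := h.exists_rel_snd_and_snd_rel
  have hw : outDeg r w ≠ 2 := (h_compl w).mpr (.inl rfl)
  have hl : outDeg r l ≠ 2 := (h_compl l).mpr (.inr rfl)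
  have hwu : r w u := h.rel_fst_of_outDeg_ne_two hw
  have hlu : r l u := h.rel_fst_of_outDeg_ne_two hl
  have htw : r t w := h.trd_rel_of_outDeg_ne_two hw
  have htl : r t l := h.trd_rel_of_outDeg_ne_two hl
  have hwl : r w l := h.rel_of_rel_snd h_compl hwv
  obtain ⟨-, _⟩ := isTournament_iff_asymm_and_trichotomous.mp isTournament_modelArc
  obtain ⟨_, -⟩ := isTournament_iff_asymm_and_trichotomous.mp h.isTournament
  refine nonempty_relIso_of_forall_rel (f := ![w, u, v, t, l]) fun i j hij => ?_
  have huv : r u v := h.rel_fst_snd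
  have hvt : r v t := h.rel_snd_trd
  have hut : r u t := h.rel_fst_trd
  fin_cases i <;> fin_cases j <;> first | assumption | exact absurd hij (by decide)

end IsMiddleChain

/-- exactly 120 tournaments on Fin 5 have no vertex of out-degree 4,
no vertex of out-degree 0, and exactly three vertices of out-degree 2, whose induced
sub-tournament is transitive, i.e. linearly ordered u → v → t with u → t
(the class Γ₂,₃). -/
theorem count_Gamma23 :
    Nat.card {r : Fin 5 → Fin 5 → Prop //
      IsTournament r ∧ (¬ ∃ w, outDeg r w = 4) ∧ (¬ ∃ l, outDeg r l = 0) ∧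
      (∃ u v t : Fin 5, u ≠ v ∧ v ≠ t ∧ u ≠ t ∧
        outDeg r u = 2 ∧ outDeg r v = 2 ∧ outDeg r t = 2 ∧
        (∀ x, outDeg r x = 2 → x = u ∨ x = v ∨ x = t) ∧
        r u v ∧ r v t ∧ r u t)} = 120 := by
  calc
    _ = Nat.card {r : Fin 5 → Fin 5 → Prop // Nonempty (ModelArc ≃r r)} := by
      refine Nat.card_congr (Equiv.subtypeEquivRight fun r => ⟨?_, fun ⟨e⟩ => ?_⟩)
      · rintro ⟨hr, -, -, u, v, t, -, -, -, hu, hv, ht, h_two, huv, hvt, hut⟩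
        have h : IsMiddleChain r u v t :=
          ⟨hr, huv, hvt, hut, fun x => ⟨h_two x, by rintro (rfl | rfl | rfl) <;> assumption⟩⟩
        exact h.nonempty_relIso_modelArc
      · have h := isMiddleChain_modelArc.map_relIso e
        refine ⟨h.isTournament, ?_, ?_, e 1, e 2, e 3, h.fst_ne_snd, h.snd_ne_trd, h.fst_ne_trd,
          h.outDeg_fst, h.outDeg_snd, h.outDeg_trd, fun x => (h.outDeg_eq_two_iff_mem x).mp,
          h.rel_fst_snd, h.rel_snd_trd, h.rel_fst_trd⟩ <;>
        · rw [e.surjective.exists]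
          simp only [outDeg_relIso, outDeg_modelArc]
          decide
    _ = Nat.card (Equiv.Perm (Fin 5)) := card_relabellings_of_subsingleton_aut
    _ = 120 := by
      rw [Nat.card_perm, Nat.card_fin]
      rfl
end
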